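/- Let λ_W > 0, λ_H ≥ 0, set ℓ := 10/λ_W + λ_H, and let β > ℓ. If H* is a global minimizer of H ↦ L(H) + (β/(2Kn))‖H − H₀‖_F² and H̃* is a global minimizer of H ↦ L(H) + (β/(2Kn))‖H − H̃₀‖_F², for inputs H₀, H̃₀ ∈ ℝ^{d×Kn}, then ‖H* − H̃*‖_F ≤ (1 − ℓ/β)^{-1} ‖H₀ − H̃₀‖_F; i.e., the input-to-minimizer map is (1 − ℓ/β)^{-1}-Lipschitz. -/

import Mathlib

open Matrix Filter
open scoped BigOperators

noncomputable section

variable {K n d : ℕ}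

/-- The one-hot label matrix `Y = I_K ⊗ 1_nᵀ`: columns are indexed by class/sample pairs. -/
def Ymat (K n : ℕ) : Matrix (Fin K) (Fin K × Fin n) ℝ :=
  Matrix.of fun k p => if p.1 = k then 1 else 0

/-- Squared Frobenius norm. -/
def frobSq {m p : Type*} [Fintype m] [Fintype p] (M : Matrix m p ℝ) : ℝ :=
  ∑ i, ∑ j, (M i j) ^ 2

/-- Frobenius norm. -/
def frobNorm {m p : Type*} [Fintype m] [Fintype p] (M : Matrix m p ℝ) : ℝ :=
  Real.sqrt (frobSq M)

/-- The unconstrained-features objective `g`. -/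
def g (lW lH : ℝ) (W : Matrix (Fin K) (Fin d) ℝ)
    (H : Matrix (Fin d) (Fin K × Fin n) ℝ) : ℝ :=
  (1 / (2 * (K : ℝ) * n)) * frobSq (W * H - Ymat K n) +
    (lW / (2 * (K : ℝ))) * frobSq W + (lH / (2 * (K : ℝ) * n)) * frobSq H

/-- Class means. -/
def classMean (H : Matrix (Fin d) (Fin K × Fin n) ℝ) (k : Fin K) : Fin d → ℝ :=
  fun a => (1 / (n : ℝ)) * ∑ i, H a (k, i)

/-- Global mean. -/
def globalMean (H : Matrix (Fin d) (Fin K × Fin n) ℝ) : Fin d → ℝ :=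
  fun a => (1 / ((K : ℝ) * n)) * ∑ p, H a p

/-- Matrix of class means `H̄ ∈ ℝ^{d×K}`. -/
def Hbar (H : Matrix (Fin d) (Fin K × Fin n) ℝ) : Matrix (Fin d) (Fin K) ℝ :=
  Matrix.of fun a k => classMean H k a

/-- `H̄ ⊗ 1_nᵀ`: the matrix whose n columns of class k all equal the class mean. -/
def HbarSpread (H : Matrix (Fin d) (Fin K × Fin n) ℝ) :
    Matrix (Fin d) (Fin K × Fin n) ℝ :=
  Matrix.of fun a p => classMean H p.1 a

/-- Within-class covariance. -/
def SigmaW (H : Matrix (Fin d) (Fin K × Fin n) ℝ) : Matrix (Fin d) (Fin d) ℝ :=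
  Matrix.of fun a b =>
    (1 / ((K : ℝ) * n)) * ∑ p : Fin K × Fin n,
      (H a p - classMean H p.1 a) * (H b p - classMean H p.1 b)

/-- Between-class covariance. -/
def SigmaB (H : Matrix (Fin d) (Fin K × Fin n) ℝ) : Matrix (Fin d) (Fin d) ℝ :=
  Matrix.of fun a b =>
    (1 / (K : ℝ)) * ∑ k : Fin K,
      (classMean H k a - globalMean H a) * (classMean H k b - globalMean H b)

/-- Non-centered total covariance. -/
def SigmaTtil (H : Matrix (Fin d) (Fin K × Fin n) ℝ) : Matrix (Fin d) (Fin d) ℝ :=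
  (1 / ((K : ℝ) * n)) • (H * Hᵀ)

/-- Non-centered between-class covariance. -/
def SigmaBtil (H : Matrix (Fin d) (Fin K × Fin n) ℝ) : Matrix (Fin d) (Fin d) ℝ :=
  Matrix.of fun a b => (1 / (K : ℝ)) * ∑ k : Fin K, classMean H k a * classMean H k b

/-- The closed-form optimal last-layer weights `W*(H)`. -/
def Wstar (lW : ℝ) (H : Matrix (Fin d) (Fin K × Fin n) ℝ) :
    Matrix (Fin K) (Fin d) ℝ :=
  Ymat K n * Hᵀ * (H * Hᵀ + ((n : ℝ) * lW) • (1 : Matrix (Fin d) (Fin d) ℝ))⁻¹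

/-- The central-path loss `L(H)`. -/
def Lcp (lW lH : ℝ) (H : Matrix (Fin d) (Fin K × Fin n) ℝ) : ℝ :=
  (1 / (2 * (K : ℝ) * n)) * frobSq (Wstar lW H * H - Ymat K n) +
    (lW / (2 * (K : ℝ))) * frobSq (Wstar lW H) +
    (lH / (2 * (K : ℝ) * n)) * frobSq H

/-- `A(H) = Σ̃_T(H) + (λ_W/K) I`. -/
def Amat (lW : ℝ) (H : Matrix (Fin d) (Fin K × Fin n) ℝ) : Matrix (Fin d) (Fin d) ℝ :=
  SigmaTtil H + (lW / (K : ℝ)) • 1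

/-- The gradient of the central-path loss w.r.t. the Frobenius inner product. -/
def gradL (lW lH : ℝ) (H : Matrix (Fin d) (Fin K × Fin n) ℝ) :
    Matrix (Fin d) (Fin K × Fin n) ℝ :=
  (1 / ((K : ℝ) ^ 2 * n)) •
    ((Amat lW H)⁻¹ * (H - HbarSpread H)
      - (Amat lW H)⁻¹ * (SigmaW H + (lW / (K : ℝ)) • 1) * (Amat lW H)⁻¹ * H
      + (lH * (K : ℝ)) • H)

/-- NC1 metric. -/
def NC1til (H : Matrix (Fin d) (Fin K × Fin n) ℝ) : ℝ :=
  (SigmaW H).trace / (SigmaB H).trace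

/-!
Minimizing over `W` turns the fitting part of `L` into the ridge value function
`φ(H) = min_W ‖W H - Y‖² + μ ‖W‖²` with `μ = n λ_W`, and the duality for this inner problem exhibits
`φ` as a supremum over `R` of the functions `2⟪Y, R⟫ - ‖R‖² - μ⁻¹ ‖R Hᵀ‖²`. These are concave
quadratics in `H`; the one touching `φ` at `H` has `R = Y - W*(H) H`, an image of `Y` under a
contraction, so its curvature is at most `2 ‖Y‖²_op / μ = 2 / λ_W`. Hence `Kn · L` is weakly convex
with modulus `1/λ_W - λ_H ≤ ℓ`, and the proximal map of a `ρ`-weakly convex function is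
`(1 - ρ/β)⁻¹`-Lipschitz because its objectives are `(β - ρ)`-strongly convex.
-/

lemma le_of_mul_le_mul_right_of_imp {R : Type*} [Semiring R] [LinearOrder R]
    [IsStrictOrderedRing R] {a b c : R} (h : a * c ≤ b * c) (hc : 0 ≤ c)
    (hzero : c = 0 → a ≤ b) : a ≤ b :=
  hc.eq_or_lt.elim (fun h₀ ↦ hzero h₀.symm) (le_of_mul_le_mul_right h)

section StrongConvexity

variable {E : Type*} [NormedAddCommGroup E] {s : Set E} {f : E → ℝ} {x y : E}

lemma add_le_of_isMinOn_of_uniformConvexOn [NormedSpace ℝ E] {ψ : ℝ → ℝ}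
    (hf : UniformConvexOn s ψ f) (hmin : IsMinOn f s x) (hx : x ∈ s) (hy : y ∈ s) :
    f x + ψ ‖x - y‖ ≤ f y := by
  have segment_bound : ∀ t ∈ Set.Ioo (0 : ℝ) 1, f x + (1 - t) * ψ ‖x - y‖ ≤ f y := by
    rintro t ⟨ht₀, ht₁⟩
    have ht₁' : 0 ≤ 1 - t := sub_nonneg.2 ht₁.le
    have hconv := hf.2 hx hy ht₁' ht₀.le (sub_add_cancel 1 t)
    have hle := hmin (hf.1 hx hy ht₁' ht₀.le (sub_add_cancel 1 t))
    rw [Set.mem_ofPred_eq] at hle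
    simp only [smul_eq_mul] at hconv
    refine le_of_mul_le_mul_left ?_ ht₀
    linarith
  have hlim : Tendsto (fun t : ℝ ↦ f x + (1 - t) * ψ ‖x - y‖) (nhdsWithin 0 (Set.Ioi 0))
      (nhds (f x + (1 - 0) * ψ ‖x - y‖)) :=
    (by fun_prop : Continuous fun t : ℝ ↦ f x + (1 - t) * ψ ‖x - y‖).continuousWithinAt
  simpa using le_of_tendsto hlim
    (eventually_of_mem (Ioo_mem_nhdsGT one_pos) segment_bound)

lemma strongConvexOn_const_mul [NormedSpace ℝ E] {c m : ℝ} (hc : 0 ≤ c)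
    (hf : StrongConvexOn s m f) : StrongConvexOn s (c * m) fun x ↦ c * f x := by
  refine ⟨hf.1, fun x hx y hy a b ha hb hab ↦ ?_⟩
  calc c * f (a • x + b • y)
      ≤ c * (a * f x + b * f y - a * b * (m / 2 * ‖x - y‖ ^ 2)) :=
        mul_le_mul_of_nonneg_left (hf.2 hx hy ha hb hab) hc
    _ = a * (c * f x) + b * (c * f y) - a * b * (c * m / 2 * ‖x - y‖ ^ 2) := by ring

lemma strongConvexOn_add [NormedSpace ℝ E] {g : E → ℝ} {m₁ m₂ : ℝ} (hf : StrongConvexOn s m₁ f)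
    (hg : StrongConvexOn s m₂ g) : StrongConvexOn s (m₁ + m₂) fun x ↦ f x + g x := by
  have hmodulus : (fun r : ℝ ↦ (m₁ + m₂) / 2 * r ^ 2)
      = (fun r ↦ m₁ / 2 * r ^ 2) + fun r ↦ m₂ / 2 * r ^ 2 := by
    ext r
    simp only [Pi.add_apply]
    ring
  rw [StrongConvexOn, hmodulus]
  exact UniformConvexOn.add hf hg

variable [InnerProductSpace ℝ E]

lemma norm_sq_convexCombination {a b : ℝ} (hab : a + b = 1) (x y : E) :
    ‖a • x + b • y‖ ^ 2 = a * ‖x‖ ^ 2 + b * ‖y‖ ^ 2 - a * b * ‖x - y‖ ^ 2 := by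
  obtain rfl := eq_sub_of_add_eq hab
  rw [norm_add_sq_real, norm_sub_sq_real, norm_smul, norm_smul, real_inner_smul_left,
    real_inner_smul_right, mul_pow, mul_pow, Real.norm_eq_abs, Real.norm_eq_abs, sq_abs, sq_abs]
  ring

lemma strongConvexOn_mul_norm_sub_sq (hs : Convex ℝ s) (m : ℝ) (x₀ : E) :
    StrongConvexOn s m fun x ↦ m / 2 * ‖x - x₀‖ ^ 2 := by
  refine ⟨hs, fun x _ y _ a b _ _ hab ↦ le_of_eq ?_⟩
  have hsplit : a • x + b • y - x₀ = a • (x - x₀) + b • (y - x₀) := by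
    rw [smul_sub, smul_sub, sub_add_sub_comm, ← add_smul, hab, one_smul]
  simp only [hsplit, norm_sq_convexCombination hab, sub_sub_sub_cancel_right, smul_eq_mul]
  ring

lemma norm_sub_sq_four_point (x y x₀ y₀ : E) :
    ‖y - x₀‖ ^ 2 - ‖x - x₀‖ ^ 2 + (‖x - y₀‖ ^ 2 - ‖y - y₀‖ ^ 2)
      = 2 * inner ℝ (x - y) (x₀ - y₀) := by
  simp only [norm_sub_sq_real, inner_sub_left, inner_sub_right]
  ring

/-- A negative `m` is allowed: `f` is then weakly convex. -/
theorem mul_norm_sub_le_of_isMinOn_add_norm_sq {m β : ℝ} {x₀ y₀ : E} (hf : StrongConvexOn s m f)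
    (hx : x ∈ s) (hy : y ∈ s) (hminx : IsMinOn (fun z ↦ f z + β / 2 * ‖z - x₀‖ ^ 2) s x)
    (hminy : IsMinOn (fun z ↦ f z + β / 2 * ‖z - y₀‖ ^ 2) s y) :
    (m + β) * ‖x - y‖ ≤ |β| * ‖x₀ - y₀‖ := by
  have hconv (z₀ : E) := strongConvexOn_add hf (strongConvexOn_mul_norm_sub_sq hf.1 β z₀)
  have growthx := add_le_of_isMinOn_of_uniformConvexOn (hconv x₀) hminx hx hy
  have growthy := add_le_of_isMinOn_of_uniformConvexOn (hconv y₀) hminy hy hx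
  rw [norm_sub_rev y x] at growthy
  have hsq : (m + β) * ‖x - y‖ * ‖x - y‖ ≤ |β| * ‖x₀ - y₀‖ * ‖x - y‖ :=
    calc (m + β) * ‖x - y‖ * ‖x - y‖
        ≤ β * inner ℝ (x - y) (x₀ - y₀) := by
          have := congrArg (β / 2 * ·) (norm_sub_sq_four_point x y x₀ y₀)
          linarith
      _ ≤ |β| * |inner ℝ (x - y) (x₀ - y₀)| := (le_abs_self _).trans_eq (abs_mul _ _)
      _ ≤ |β| * (‖x - y‖ * ‖x₀ - y₀‖) := by gcongr; exact abs_real_inner_le_norm _ _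
      _ = |β| * ‖x₀ - y₀‖ * ‖x - y‖ := by ring
  refine le_of_mul_le_mul_right_of_imp hsq (norm_nonneg _) fun hzero ↦ ?_
  rw [hzero, mul_zero]
  positivity

end StrongConvexity

section FrobeniusInner

open scoped Matrix.Norms.Frobenius

variable {m p q : Type*} [Fintype m] [Fintype p] [Fintype q]

lemma norm_sq_eq_frobSq (A : Matrix m p ℝ) : ‖A‖ ^ 2 = frobSq A := by
  have h : 0 ≤ frobSq A := by unfold frobSq; positivity
  simp only [frobenius_norm_def, Real.norm_eq_abs, Real.rpow_two, sq_abs, ← Real.sqrt_eq_rpow]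
  exact Real.sq_sqrt h

lemma frobNorm_eq_norm (A : Matrix m p ℝ) : frobNorm A = ‖A‖ := by
  rw [frobNorm, ← norm_sq_eq_frobSq, Real.sqrt_sq (norm_nonneg A)]

/-- The Frobenius inner product `⟪A, B⟫ = tr (A Bᵀ)` on real matrices; it induces Mathlib's
Frobenius norm and lets the Euclidean theory of strong convexity apply to matrices. -/
instance frobeniusInnerProductSpace : InnerProductSpace ℝ (Matrix m p ℝ) where
  inner A B := (A * Bᵀ).trace
  norm_sq_eq_re_inner A := by
    rw [norm_sq_eq_frobSq]
    simp [frobSq, trace, mul_apply, sq]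
  conj_inner_symm A B := by
    change (B * Aᵀ).trace = (A * Bᵀ).trace
    rw [← trace_transpose, transpose_mul, transpose_transpose]
  add_left A B C := by simp [Matrix.add_mul]
  smul_left A B c := by simp

lemma frobenius_inner_def (A B : Matrix m p ℝ) : inner ℝ A B = (A * Bᵀ).trace := rfl

lemma inner_mul_left_eq_inner_mul_transpose (A : Matrix m p ℝ) (B : Matrix p q ℝ)
    (C : Matrix m q ℝ) : inner ℝ (A * B) C = inner ℝ A (C * Bᵀ) := by
  simp [frobenius_inner_def, Matrix.mul_assoc]

lemma inner_mul_left_eq_inner_transpose_mul (A : Matrix m p ℝ) (B : Matrix p q ℝ)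
    (C : Matrix m q ℝ) : inner ℝ (A * B) C = inner ℝ B (Aᵀ * C) := by
  rw [frobenius_inner_def, frobenius_inner_def, Matrix.mul_assoc, trace_mul_comm]
  simp [Matrix.mul_assoc]

lemma norm_mul_le_of_norm_transpose_mul_le {c : ℝ} (hc : 0 ≤ c) {A : Matrix m p ℝ}
    (hA : ∀ U : Matrix m q ℝ, ‖Aᵀ * U‖ ≤ c * ‖U‖) (B : Matrix p q ℝ) : ‖A * B‖ ≤ c * ‖B‖ := by
  have hsq : ‖A * B‖ * ‖A * B‖ ≤ c * ‖B‖ * ‖A * B‖ :=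
    calc ‖A * B‖ * ‖A * B‖ = inner ℝ B (Aᵀ * (A * B)) := by
          rw [← inner_mul_left_eq_inner_transpose_mul, real_inner_self_eq_norm_mul_norm]
      _ ≤ ‖B‖ * ‖Aᵀ * (A * B)‖ := real_inner_le_norm _ _
      _ ≤ ‖B‖ * (c * ‖A * B‖) := by gcongr; exact hA _
      _ = c * ‖B‖ * ‖A * B‖ := by ring
  exact le_of_mul_le_mul_right_of_imp hsq (norm_nonneg _) fun hzero ↦
    hzero.trans_le (by positivity)

end FrobeniusInner

section Ridge

open scoped Matrix.Norms.Frobenius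

variable {m p q : Type*} [Fintype p] [Fintype q] {μ : ℝ}

lemma ridge_dual_le [Fintype m] (hμ : 0 < μ) (W : Matrix m p ℝ) (H : Matrix p q ℝ)
    (Y R : Matrix m q ℝ) :
    2 * inner ℝ Y R - ‖R‖ ^ 2 - μ⁻¹ * ‖R * Hᵀ‖ ^ 2 ≤ ‖W * H - Y‖ ^ 2 + μ * ‖W‖ ^ 2 := by
  have fit : 2 * inner ℝ Y R - 2 * inner ℝ W (R * Hᵀ) - ‖R‖ ^ 2 ≤ ‖W * H - Y‖ ^ 2 := by
    have h := sq_nonneg ‖W * H - Y + R‖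
    rw [norm_add_sq_real, inner_sub_left, inner_mul_left_eq_inner_mul_transpose] at h
    linarith
  have penalty : 2 * inner ℝ W (R * Hᵀ) - μ⁻¹ * ‖R * Hᵀ‖ ^ 2 ≤ μ * ‖W‖ ^ 2 := by
    have h := mul_nonneg hμ.le (sq_nonneg ‖W - μ⁻¹ • (R * Hᵀ)‖)
    rw [norm_sub_sq_real, real_inner_smul_right, norm_smul,
      Real.norm_of_nonneg (by positivity)] at h
    field_simp at h ⊢
    linarith
  linarith

variable [DecidableEq p]

/-- The minimizer of the ridge objective `W ↦ ‖W H - Y‖² + μ ‖W‖²`, in closed form; `Wstar` is the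
case `μ = n λ_W`, `Y = I_K ⊗ 1_nᵀ`. -/
def ridgeWeights (μ : ℝ) (Y : Matrix m q ℝ) (H : Matrix p q ℝ) : Matrix m p ℝ :=
  Y * Hᵀ * (H * Hᵀ + μ • (1 : Matrix p p ℝ))⁻¹

/-- The residual `Y - W H` of ridge regression; up to the factor `μ⁻¹` it is the optimal solution
of the dual problem. -/
def ridgeResidual (μ : ℝ) (Y : Matrix m q ℝ) (H : Matrix p q ℝ) : Matrix m q ℝ :=
  Y - ridgeWeights μ Y H * H

lemma ridgeResidual_mul_transpose (hμ : 0 < μ) (Y : Matrix m q ℝ) (H : Matrix p q ℝ) :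
    ridgeResidual μ Y H * Hᵀ = μ • ridgeWeights μ Y H := by
  have hpd : (H * Hᵀ + μ • (1 : Matrix p p ℝ)).PosDef :=
    .posSemidef_add (by simpa using posSemidef_self_mul_conjTranspose H) (PosDef.one.smul hμ)
  have hnormal : ridgeWeights μ Y H * (H * Hᵀ + μ • (1 : Matrix p p ℝ)) = Y * Hᵀ :=
    nonsing_inv_mul_cancel_right _ _ hpd.det_pos.ne'.isUnit
  rw [ridgeResidual, Matrix.sub_mul, ← hnormal, Matrix.mul_add, Matrix.mul_assoc]
  simp

variable [Fintype m]

/-- The optimal value of ridge regression as a function of the features `H`. -/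
def ridgeValue (μ : ℝ) (Y : Matrix m q ℝ) (H : Matrix p q ℝ) : ℝ :=
  ‖ridgeWeights μ Y H * H - Y‖ ^ 2 + μ * ‖ridgeWeights μ Y H‖ ^ 2

lemma ridgeValue_eq_dual (hμ : 0 < μ) (Y : Matrix m q ℝ) (H : Matrix p q ℝ) :
    ridgeValue μ Y H = 2 * inner ℝ Y (ridgeResidual μ Y H) - ‖ridgeResidual μ Y H‖ ^ 2
      - μ⁻¹ * ‖ridgeResidual μ Y H * Hᵀ‖ ^ 2 := by
  have hinner : inner ℝ Y (ridgeResidual μ Y H)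
      = ‖ridgeResidual μ Y H‖ ^ 2 + μ * ‖ridgeWeights μ Y H‖ ^ 2 := by
    have hY : Y = ridgeResidual μ Y H + ridgeWeights μ Y H * H := by simp [ridgeResidual]
    nth_rw 1 [hY]
    rw [inner_add_left, inner_mul_left_eq_inner_mul_transpose, ridgeResidual_mul_transpose hμ,
      real_inner_smul_right, real_inner_self_eq_norm_sq, real_inner_self_eq_norm_sq]
  rw [ridgeValue, norm_sub_rev, ← ridgeResidual, hinner, ridgeResidual_mul_transpose hμ, norm_smul,
    Real.norm_of_nonneg hμ.le]
  field_simp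
  ring

lemma ridgeValue_add_le_ridgeValue (hμ : 0 < μ) (Y : Matrix m q ℝ) (H A : Matrix p q ℝ) :
    ridgeValue μ Y H
        + μ⁻¹ * (‖ridgeResidual μ Y H * Hᵀ‖ ^ 2 - ‖ridgeResidual μ Y H * Aᵀ‖ ^ 2)
      ≤ ridgeValue μ Y A := by
  have hdual := ridge_dual_le hμ (ridgeWeights μ Y A) A Y (ridgeResidual μ Y H)
  rw [← ridgeValue] at hdual
  rw [ridgeValue_eq_dual hμ Y H]
  linarith

lemma norm_transpose_ridgeResidual_mul_le (hμ : 0 < μ) (Y : Matrix m q ℝ) (H : Matrix p q ℝ)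
    {r : Type*} [Fintype r] (U : Matrix m r ℝ) :
    ‖(ridgeResidual μ Y H)ᵀ * U‖ ≤ ‖Yᵀ * U‖ := by
  set R := ridgeResidual μ Y H with hR
  have hY : μ • Y = R * Hᵀ * H + μ • R := by
    rw [hR, ridgeResidual_mul_transpose hμ, ridgeResidual, smul_sub, Matrix.smul_mul,
      add_sub_cancel]
  have hinner : μ * inner ℝ (Rᵀ * U) (Yᵀ * U) = ‖H * (Rᵀ * U)‖ ^ 2 + μ * ‖Rᵀ * U‖ ^ 2 :=
    calc μ * inner ℝ (Rᵀ * U) (Yᵀ * U) = inner ℝ (Rᵀ * U) ((μ • Y)ᵀ * U) := by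
          rw [transpose_smul, Matrix.smul_mul, real_inner_smul_right]
      _ = inner ℝ (Rᵀ * U) (Hᵀ * (H * (Rᵀ * U))) + μ * inner ℝ (Rᵀ * U) (Rᵀ * U) := by
          rw [hY, transpose_add, transpose_smul, transpose_mul, transpose_mul,
            transpose_transpose, Matrix.add_mul, inner_add_right, Matrix.smul_mul,
            real_inner_smul_right, Matrix.mul_assoc, Matrix.mul_assoc]
      _ = ‖H * (Rᵀ * U)‖ ^ 2 + μ * ‖Rᵀ * U‖ ^ 2 := by
          rw [← inner_mul_left_eq_inner_transpose_mul, real_inner_self_eq_norm_sq,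
            real_inner_self_eq_norm_sq]
  have hsq : ‖Rᵀ * U‖ * ‖Rᵀ * U‖ ≤ ‖Yᵀ * U‖ * ‖Rᵀ * U‖ := by
    refine le_of_mul_le_mul_left ?_ hμ
    have hcs := mul_le_mul_of_nonneg_left (real_inner_le_norm (Rᵀ * U) (Yᵀ * U)) hμ.le
    linarith [sq_nonneg ‖H * (Rᵀ * U)‖]
  exact le_of_mul_le_mul_right_of_imp hsq (norm_nonneg _) fun hzero ↦
    hzero.trans_le (norm_nonneg _)

theorem strongConvexOn_ridgeValue (hμ : 0 < μ) {c : ℝ} (hc : 0 ≤ c) {Y : Matrix m q ℝ}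
    (hY : ∀ U : Matrix m p ℝ, ‖Yᵀ * U‖ ≤ c * ‖U‖) :
    StrongConvexOn Set.univ (-(2 * c ^ 2 / μ)) (ridgeValue μ Y : Matrix p q ℝ → ℝ) := by
  refine ⟨convex_univ, fun A _ B _ a b ha hb hab ↦ ?_⟩
  set H := a • A + b • B
  set R := ridgeResidual μ Y H
  have hsplit : ‖R * Hᵀ‖ ^ 2
      = a * ‖R * Aᵀ‖ ^ 2 + b * ‖R * Bᵀ‖ ^ 2 - a * b * ‖R * (A - B)ᵀ‖ ^ 2 := by
    simp only [H, transpose_add, transpose_smul, transpose_sub, Matrix.mul_add, Matrix.mul_sub,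
      Matrix.mul_smul, norm_sq_convexCombination hab]
  have hcurv : ‖R * (A - B)ᵀ‖ ≤ c * ‖A - B‖ := by
    rw [← frobenius_norm_transpose (A - B)]
    exact norm_mul_le_of_norm_transpose_mul_le hc
      (fun U ↦ (norm_transpose_ridgeResidual_mul_le hμ Y H U).trans (hY U)) _
  simp only [smul_eq_mul]
  calc ridgeValue μ Y H
      = a * (ridgeValue μ Y H + μ⁻¹ * (‖R * Hᵀ‖ ^ 2 - ‖R * Aᵀ‖ ^ 2))
        + b * (ridgeValue μ Y H + μ⁻¹ * (‖R * Hᵀ‖ ^ 2 - ‖R * Bᵀ‖ ^ 2))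
        + a * b * (μ⁻¹ * ‖R * (A - B)ᵀ‖ ^ 2) := by
        linear_combination -(ridgeValue μ Y H + μ⁻¹ * ‖R * Hᵀ‖ ^ 2) * hab - μ⁻¹ * hsplit
    _ ≤ a * ridgeValue μ Y A + b * ridgeValue μ Y B + a * b * (μ⁻¹ * (c * ‖A - B‖) ^ 2) := by
        gcongr <;> exact ridgeValue_add_le_ridgeValue hμ Y H _
    _ = a * ridgeValue μ Y A + b * ridgeValue μ Y B
        - a * b * (-(2 * c ^ 2 / μ) / 2 * ‖A - B‖ ^ 2) := by ring

end Ridge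

section CentralPath

open scoped Matrix.Norms.Frobenius

lemma norm_transpose_Ymat_mul {p : Type*} [Fintype p] (U : Matrix (Fin K) p ℝ) :
    ‖(Ymat K n)ᵀ * U‖ = √n * ‖U‖ := by
  have hsq : frobSq ((Ymat K n)ᵀ * U) = n * frobSq U := by
    simp [frobSq, mul_apply, Ymat, Fintype.sum_prod_type, Finset.mul_sum]
  rw [← frobNorm_eq_norm, ← frobNorm_eq_norm, frobNorm, frobNorm, hsq,
    Real.sqrt_mul (Nat.cast_nonneg n)]

lemma Lcp_eq_ridgeValue_add (hn : 0 < n) (lW lH : ℝ) (H : Matrix (Fin d) (Fin K × Fin n) ℝ) :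
    Lcp lW lH H = 1 / (2 * (K : ℝ) * n) * ridgeValue (n * lW) (Ymat K n) H
      + lH / (K * n) / 2 * ‖H‖ ^ 2 := by
  have hW : Wstar lW H = ridgeWeights (n * lW) (Ymat K n) H := rfl
  rw [ridgeValue, Lcp, ← hW]
  simp only [norm_sq_eq_frobSq]
  field_simp

theorem strongConvexOn_Lcp (hK : 0 < K) (hn : 0 < n) {lW : ℝ} (hlW : 0 < lW) (lH : ℝ) :
    StrongConvexOn Set.univ ((lH - 1 / lW) / (K * n))
      (Lcp lW lH : Matrix (Fin d) (Fin K × Fin n) ℝ → ℝ) := by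
  have hvalue := strongConvexOn_const_mul (c := 1 / (2 * (K : ℝ) * n)) (by positivity)
    (strongConvexOn_ridgeValue (μ := n * lW) (by positivity) (Real.sqrt_nonneg n)
      fun U : Matrix (Fin K) (Fin d) ℝ ↦ (norm_transpose_Ymat_mul (n := n) U).le)
  have hpenalty := strongConvexOn_mul_norm_sub_sq convex_univ (lH / (K * n))
    (0 : Matrix (Fin d) (Fin K × Fin n) ℝ)
  convert! strongConvexOn_add hvalue hpenalty using 1
  · rw [Real.sq_sqrt (Nat.cast_nonneg n)]
    field_simp
    ring
  · exact funext fun H ↦ by rw [Lcp_eq_ridgeValue_add hn, sub_zero]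

theorem proximal_map_lipschitz_general
    (K n d : ℕ) (hK : 0 < K) (hn : 0 < n) (lW lH : ℝ) (hlW : 0 < lW)
    (ρ β : ℝ) (hβ₀ : 0 < β) (hρ : 1 / lW - lH ≤ ρ) (hβ : ρ < β)
    (H₀ Ht₀ : Matrix (Fin d) (Fin K × Fin n) ℝ)
    (Hs Hts : Matrix (Fin d) (Fin K × Fin n) ℝ)
    (hminHs : ∀ H' : Matrix (Fin d) (Fin K × Fin n) ℝ,
      Lcp lW lH Hs + (β / (2 * (K : ℝ) * n)) * frobSq (Hs - H₀)
        ≤ Lcp lW lH H' + (β / (2 * (K : ℝ) * n)) * frobSq (H' - H₀))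
    (hminHts : ∀ H' : Matrix (Fin d) (Fin K × Fin n) ℝ,
      Lcp lW lH Hts + (β / (2 * (K : ℝ) * n)) * frobSq (Hts - Ht₀)
        ≤ Lcp lW lH H' + (β / (2 * (K : ℝ) * n)) * frobSq (H' - Ht₀)) :
    frobNorm (Hs - Hts) ≤ (1 - ρ / β)⁻¹ * frobNorm (H₀ - Ht₀) := by
  have hscale : β / (2 * (K : ℝ) * n) = β / (K * n) / 2 := by ring
  simp only [hscale, ← norm_sq_eq_frobSq] at hminHs hminHts
  have hlip := mul_norm_sub_le_of_isMinOn_add_norm_sq (strongConvexOn_Lcp hK hn hlW lH)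
    (Set.mem_univ Hs) (Set.mem_univ Hts) (isMinOn_univ_iff.2 hminHs) (isMinOn_univ_iff.2 hminHts)
  rw [abs_of_pos (by positivity), ← add_div, div_mul_eq_mul_div, div_mul_eq_mul_div,
    div_le_div_iff_of_pos_right (by positivity)] at hlip
  rw [frobNorm_eq_norm, frobNorm_eq_norm, one_sub_div hβ₀.ne', inv_div, div_mul_eq_mul_div,
    le_div_iff₀' (sub_pos.2 hβ)]
  refine le_trans ?_ hlip
  gcongr
  linarith

end CentralPath

/-- with `ℓ = 10/λ_W + λ_H` and `β > ℓ`, the input-to-minimizer map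
`H₀ ↦ argmin_H L(H) + (β/(2Kn))‖H − H₀‖_F²` is `(1 − ℓ/β)⁻¹`-Lipschitz. -/
theorem proximal_map_lipschitz
    (K n d : ℕ) (hK : 0 < K) (hn : 0 < n) (hdK : K ≤ d)
    (lW lH : ℝ) (hlW : 0 < lW) (hlH : 0 ≤ lH)
    (β : ℝ) (hβ : 10 / lW + lH < β)
    (H₀ Ht₀ : Matrix (Fin d) (Fin K × Fin n) ℝ)
    (Hs Hts : Matrix (Fin d) (Fin K × Fin n) ℝ)
    (hminHs : ∀ H' : Matrix (Fin d) (Fin K × Fin n) ℝ,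
      Lcp lW lH Hs + (β / (2 * (K : ℝ) * n)) * frobSq (Hs - H₀)
        ≤ Lcp lW lH H' + (β / (2 * (K : ℝ) * n)) * frobSq (H' - H₀))
    (hminHts : ∀ H' : Matrix (Fin d) (Fin K × Fin n) ℝ,
      Lcp lW lH Hts + (β / (2 * (K : ℝ) * n)) * frobSq (Hts - Ht₀)
        ≤ Lcp lW lH H' + (β / (2 * (K : ℝ) * n)) * frobSq (H' - Ht₀)) :
    frobNorm (Hs - Hts)
      ≤ (1 - (10 / lW + lH) / β)⁻¹ * frobNorm (H₀ - Ht₀) := by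
  have hρ : 1 / lW - lH ≤ 10 / lW + lH := by
    linarith [div_le_div_of_nonneg_right (by norm_num : (1 : ℝ) ≤ 10) hlW.le]
  exact proximal_map_lipschitz_general K n d hK hn lW lH hlW _ β (lt_trans (by positivity) hβ) hρ hβ
    H₀ Ht₀ Hs Hts hminHs hminHts

end
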